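/- arXiv:1902.00568 — 2 statements merged into one kernel-verified Lean document; each statement's English description precedes it below -/
import Mathlib

section
/- For monic f ∈ F_q[t] and integers n, the sum over square-free monic D of degree 2g+1 coprime to Δ of χ_D(f) can be expressed via sums over all monic polynomials: Σ_{D ∈ H*_{2g+1}} χ_D(f) = Σ_{C_1 | Δ} μ(C_1) χ_{C_1}(f) Σ_{C_2 | (Δf)^∞} Σ_{R monic, deg R = 2g+1−deg C_1 − 2 deg C_2} χ_R(f) − q Σ_{C_1 | Δ} μ(C_1) χ_{C_1}(f) Σ_{C_2 | (Δf)^∞} Σ_{R monic, deg R = 2g−1−deg C_1 − 2 deg C_2} χ_R(f). -/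
open Polynomial UniqueFactorizationMonoid

open Classical in
/-- Quadratic residue symbol `(f/P)` for `P` a monic irreducible polynomial:
`0` if `P ∣ f`, `1` if `f` is a nonzero square mod `P`, `-1` otherwise. -/
noncomputable def legSym {F : Type*} [Field F] (P f : Polynomial F) : ℤ :=
  if P ∣ f then 0 else if ∃ g, P ∣ (g * g - f) then 1 else -1

/-- The quadratic character `χ_m(a) = (a/m)`, extended multiplicatively over the
irreducible factors of the modulus `m`. -/
noncomputable def jacSym {F : Type*} [Field F] (a m : Polynomial F) : ℤ :=
  ((factors m).map (fun P => legSym P a)).prod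

open Classical in
/-- The Möbius function on `F_q[t]`. -/
noncomputable def polyMoebius {F : Type*} [Field F] (f : Polynomial F) : ℤ :=
  if Squarefree f then (-1) ^ Multiset.card (factors f) else 0


namespace CharSum

variable {F : Type*} [Field F]

lemma tsum_fin {α : Type*} (p : α → Prop) (s : Finset α) (φ : α → ℤ) (h : ∀ x ∈ s, p x)
    (h0 : ∀ x, p x → x ∉ s → φ x = 0) : ∑' x : {x // p x}, φ x = ∑ x ∈ s, φ x := by
  have h1 := tsum_subtype {x | p x} φ
  refine Eq.trans h1 ?_
  rw [tsum_eq_sum (s := s)]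
  · refine Finset.sum_congr rfl fun x hx => ?_
    exact Set.indicator_of_mem (s := {x | p x}) (h x hx) φ
  · intro x hx
    by_cases hp : p x
    · rw [Set.indicator_of_mem (s := {x | p x}) hp]; exact h0 x hp hx
    · exact Set.indicator_of_notMem (s := {x | p x}) hp φ

lemma legSym_mul [Finite F] {P : F[X]} (hP : Prime P) (a b : F[X]) :
    legSym P (a * b) = legSym P a * legSym P b := by
  classical
  have : Fact (Irreducible P) := ⟨hP.irreducible⟩
  have : Module.Finite F (AdjoinRoot P) := (AdjoinRoot.powerBasis hP.ne_zero).finite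
  have : Finite (AdjoinRoot P) := Module.finite_of_finite F
  have : Fintype (AdjoinRoot P) := Fintype.ofFinite _
  have key : ∀ c : F[X], legSym P c = quadraticCharFun (AdjoinRoot P) (AdjoinRoot.mk P c) := by
    intro c
    unfold legSym quadraticCharFun
    have h1 : (AdjoinRoot.mk P c = 0) ↔ P ∣ c := AdjoinRoot.mk_eq_zero
    have h2 : IsSquare (AdjoinRoot.mk P c) ↔ ∃ g, P ∣ (g * g - c) := by
      constructor
      · rintro ⟨r, hr⟩
        obtain ⟨g, rfl⟩ := AdjoinRoot.mk_surjective r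
        refine ⟨g, AdjoinRoot.mk_eq_mk.1 ?_⟩
        rw [hr, map_mul]
      · rintro ⟨g, hg⟩
        refine ⟨AdjoinRoot.mk P g, ?_⟩
        rw [← map_mul]
        exact (AdjoinRoot.mk_eq_mk.2 hg).symm
    simp only [h1, h2]
  rw [key, key, key, map_mul, quadraticCharFun_mul]

lemma jacSym_mul [Finite F] (f a b : F[X]) :
    jacSym (a * b) f = jacSym a f * jacSym b f := by
  unfold jacSym
  rw [← Multiset.prod_map_mul]
  congr 1
  refine Multiset.map_congr rfl fun P hP => ?_
  exact legSym_mul (prime_of_factor P hP) a b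

lemma jacSym_eq_zero {f a : F[X]} (hf : f ≠ 0) (h : ¬ IsCoprime a f) : jacSym a f = 0 := by
  have : ∃ P, Prime P ∧ P ∣ a ∧ P ∣ f := by
    by_contra hc
    push Not at hc
    exact h (isCoprime_of_prime_dvd (fun h => hf h.2) hc)
  obtain ⟨P, hP, h1, h2⟩ := this
  obtain ⟨Q, hQ, hPQ⟩ := exists_mem_factors_of_dvd hf hP.irreducible h2
  unfold jacSym
  apply Multiset.prod_eq_zero
  rw [Multiset.mem_map]
  refine ⟨Q, hQ, ?_⟩
  unfold legSym
  rw [if_pos (hPQ.symm.dvd.trans h1)]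

lemma jacSym_sq {f a : F[X]} (h : IsCoprime a f) : jacSym (a * a) f = 1 := by
  unfold jacSym
  apply Multiset.prod_eq_one
  intro x hx
  rw [Multiset.mem_map] at hx
  obtain ⟨P, hP, rfl⟩ := hx
  have hp := prime_of_factor P hP
  have hd := dvd_of_mem_factors hP
  unfold legSym
  rw [if_neg, if_pos ⟨a, by simp⟩]
  intro hh
  have : P ∣ a := (hp.dvd_or_dvd hh).elim id id
  exact hp.not_isUnit (h.isUnit_of_dvd' this hd)

/-- monic polynomials of degree at most `n` -/
lemma finite_box [Finite F] (n : ℕ) : {p : F[X] | p.Monic ∧ p.natDegree ≤ n}.Finite := by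
  have : Finite (degreeLT F (n+1)) := Finite.of_equiv _ (degreeLTEquiv F (n+1)).toEquiv.symm
  refine Set.Finite.subset (s := (degreeLT F (n+1) : Set F[X])) (Set.toFinite _) ?_
  rintro p ⟨hp, hn⟩
  simp only [SetLike.mem_coe, mem_degreeLT]
  exact lt_of_le_of_lt degree_le_natDegree (by exact_mod_cast Nat.lt_succ_of_le hn)

noncomputable def box (F : Type*) [Field F] [Finite F] (n : ℕ) : Finset F[X] := (finite_box (F := F) n).toFinset

lemma mem_box [Finite F] {n : ℕ} {p : F[X]} : p ∈ box F n ↔ p.Monic ∧ p.natDegree ≤ n := by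
  simp [box]

open Classical in
noncomputable def M (F : Type*) [Field F] [Finite F] (z : ℤ) : Finset F[X] :=
  (box F z.toNat).filter fun p => (p.natDegree : ℤ) = z

lemma mem_M [Finite F] {z : ℤ} {p : F[X]} : p ∈ M F z ↔ p.Monic ∧ (p.natDegree : ℤ) = z := by
  simp only [M, Finset.mem_filter, mem_box]
  constructor
  · tauto
  · rintro ⟨h1, h2⟩
    exact ⟨⟨h1, by omega⟩, h2⟩

lemma card_M [Fintype F] (k : ℕ) : (M F (k : ℤ)).card = Fintype.card F ^ k := by
  have e : {p // p ∈ M F (k:ℤ)} ≃ (Fin k → F) :=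
    (Equiv.subtypeEquivRight (fun p => by simp [mem_M])).trans
      ((monicEquivDegreeLT (R := F) k).trans (degreeLTEquiv F k).toEquiv)
  rw [← Fintype.card_coe, Fintype.card_congr e]
  simp

lemma monic_eq {a b : F[X]} (ha : a.Monic) (hb : b.Monic) (h1 : a ∣ b) (h2 : b ∣ a) : a = b :=
  eq_of_monic_of_associated ha hb (associated_of_dvd_dvd h1 h2)

lemma coprime_ne {a h : F[X]} (hh : h ≠ 0) : IsCoprime a h ↔ ∀ P, Prime P → P ∣ a → ¬ P ∣ h :=
  ⟨fun hc _ hP h1 h2 => hP.not_isUnit (hc.isUnit_of_dvd' h1 h2),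
    fun H => isCoprime_of_prime_dvd (fun h => hh h.2) H⟩

/-! squarefree decomposition -/
lemma sqf_exists (N : F[X]) (hN : N.Monic) :
    ∃ D E : F[X], D.Monic ∧ E.Monic ∧ Squarefree D ∧ N = D * (E * E) := by
  classical
  have H : ∀ N : F[X], N ≠ 0 → ∃ D E : F[X], Squarefree D ∧ N = D * (E * E) := by
    intro N
    induction N using induction_on_prime with
    | h₁ => intro h; exact absurd rfl h
    | h₂ x hx => intro _; exact ⟨x, 1, hx.squarefree, by ring⟩
    | h₃ a p ha hp ih =>
      intro _
      obtain ⟨D, E, hD, rfl⟩ := ih ha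
      by_cases hpD : p ∣ D
      · obtain ⟨d, rfl⟩ := hpD
        exact ⟨d, p * E, hD.of_mul_right, by ring⟩
      · refine ⟨p * D, E, squarefree_mul_iff.2 ⟨?_, hp.squarefree, hD⟩, by ring⟩
        exact hp.irreducible.isRelPrime_iff_not_dvd.2 hpD
  obtain ⟨D, E, hD, h⟩ := H N hN.ne_zero
  have h0 : D ≠ 0 := by rintro rfl; exact hN.ne_zero (by simp [h])
  have h1 : E ≠ 0 := by rintro rfl; exact hN.ne_zero (by simp [h])
  refine ⟨normalize D, normalize E, monic_normalize h0, monic_normalize h1, ?_, ?_⟩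
  · exact (associated_normalize D).squarefree_iff.1 hD
  · rw [← normalize_mul, ← normalize_mul, ← h, hN.normalize_eq_self]

lemma sqf_dvd {D E E' : F[X]} (hE : E ≠ 0) (hD : Squarefree D) (h : E' * E' ∣ D * (E * E)) : E' ∣ E := by
  classical
  let : GCDMonoid F[X] := UniqueFactorizationMonoid.toGCDMonoid _
  obtain ⟨e, e', h1, h2, hc⟩ := extract_gcd E E'
  have hc : IsCoprime e e' := (gcd_isUnit_iff e e').1 hc
  generalize gcd E E' = G at *
  have hG : G ≠ 0 := by intro hG; rw [hG, zero_mul] at h1; exact hE h1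
  have h3 : e' * e' ∣ D * (e * e) := by
    rw [h1, h2] at h
    have : (G * G) * (e' * e') ∣ (G * G) * (D * (e * e)) := by
      convert h using 1 <;> ring
    exact (mul_dvd_mul_iff_left (mul_ne_zero hG hG)).1 this
  have h4 : e' * e' ∣ D := by
    have hc' : IsCoprime (e' * e') (e * e) := (hc.symm.mul_right hc.symm).mul_left (hc.symm.mul_right hc.symm)
    exact hc'.dvd_of_dvd_mul_right h3
  have hu := hD e' h4
  rw [h2, h1]
  exact mul_dvd_mul_left _ hu.dvd

lemma sqf_unique {D E D' E' : F[X]} (hE : E.Monic) (hE' : E'.Monic) (hD : Squarefree D)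
    (hD' : Squarefree D') (h : D * (E * E) = D' * (E' * E')) : D = D' ∧ E = E' := by
  have : E = E' := monic_eq hE hE' (sqf_dvd hE'.ne_zero hD' (h ▸ Dvd.intro_left _ rfl))
    (sqf_dvd hE.ne_zero hD (h ▸ Dvd.intro_left _ rfl))
  subst this
  exact ⟨mul_right_cancel₀ (mul_ne_zero hE.ne_zero hE.ne_zero) h, rfl⟩

/-! smooth/coprime decomposition -/
def Smooth (h C : F[X]) : Prop := ∀ P : F[X], Prime P → P ∣ C → P ∣ h

lemma split_exists {h : F[X]} (hh : h ≠ 0) (B : F[X]) (hB : B.Monic) :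
    ∃ C E : F[X], C.Monic ∧ E.Monic ∧ Smooth h C ∧ IsCoprime E h ∧ B = C * E := by
  classical
  have H : ∀ B : F[X], B ≠ 0 → ∃ C E : F[X], Smooth h C ∧ IsCoprime E h ∧ B = C * E := by
    intro B
    induction B using induction_on_prime with
    | h₁ => intro h; exact absurd rfl h
    | h₂ x hx =>
      intro _
      refine ⟨x, 1, fun P hP hPx => absurd (isUnit_of_dvd_unit hPx hx) hP.not_isUnit, isCoprime_one_left, by ring⟩
    | h₃ a p ha hp ih =>
      intro _
      obtain ⟨C, E, hC, hE, rfl⟩ := ih ha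
      by_cases hph : p ∣ h
      · refine ⟨p * C, E, ?_, hE, by ring⟩
        intro P hP hd
        rcases hP.dvd_or_dvd hd with h1 | h1
        · exact ((hP.associated_of_dvd hp h1).dvd).trans hph
        · exact hC P hP h1
      · refine ⟨C, p * E, hC, IsCoprime.mul_left ?_ hE, by ring⟩
        exact (hp.irreducible.coprime_iff_not_dvd).2 hph
  obtain ⟨C, E, hC, hE, e⟩ := H B hB.ne_zero
  have h0 : C ≠ 0 := by rintro rfl; exact hB.ne_zero (by simp [e])
  have h1 : E ≠ 0 := by rintro rfl; exact hB.ne_zero (by simp [e])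
  refine ⟨normalize C, normalize E, monic_normalize h0, monic_normalize h1, ?_, ?_, ?_⟩
  · intro P hP hd
    exact hC P hP (hd.trans (normalize_dvd_iff.2 dvd_rfl))
  · exact hE.of_isCoprime_of_dvd_left (normalize_dvd_iff.2 dvd_rfl)
  · rw [← normalize_mul, ← e, hB.normalize_eq_self]

lemma smooth_coprime {h C E : F[X]} (hE0 : E ≠ 0) (hC : Smooth h C) (hE : IsCoprime E h) : IsCoprime C E :=
  (coprime_ne hE0).2 fun P hP h1 h2 => hP.not_isUnit (hE.isUnit_of_dvd' h2 (hC P hP h1))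

lemma split_unique {h C E C' E' : F[X]} (c : C.Monic) (e : E.Monic) (c' : C'.Monic) (e' : E'.Monic)
    (hC : Smooth h C) (hE : IsCoprime E h) (hC' : Smooth h C') (hE' : IsCoprime E' h)
    (H : C * E = C' * E') : C = C' ∧ E = E' := by
  have : C = C' := monic_eq c c'
    ((smooth_coprime e'.ne_zero hC hE').dvd_of_dvd_mul_right (H ▸ Dvd.intro _ rfl))
    ((smooth_coprime e.ne_zero hC' hE).dvd_of_dvd_mul_right (H ▸ Dvd.intro _ rfl))
  subst this
  exact ⟨rfl, mul_left_cancel₀ c.ne_zero H⟩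

/-! Moebius -/
lemma moebius_mul_prime {P C : F[X]} (hP : Prime P) (hC : Squarefree C) (h : ¬ P ∣ C) :
    Squarefree (P * C) ∧ polyMoebius (P * C) = - polyMoebius C := by
  have h1 : Squarefree (P * C) := squarefree_mul_iff.2
    ⟨hP.irreducible.isRelPrime_iff_not_dvd.2 h, hP.squarefree, hC⟩
  refine ⟨h1, ?_⟩
  unfold polyMoebius
  rw [if_pos h1, if_pos hC]
  have h2 := Multiset.card_eq_card_of_rel (factors_mul hP.ne_zero hC.ne_zero)
  rw [h2, Multiset.card_add, card_factors_of_irreducible hP.irreducible, pow_add]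
  simp

end CharSum

namespace CharSum

variable {F : Type*} [Field F]

open Classical in
lemma moebius_sum [Finite F] {Δ N : F[X]} (hΔ : Δ ≠ 0) :
    ∑ C ∈ (box F Δ.natDegree).filter (fun C => C ∣ Δ ∧ C ∣ N), polyMoebius C =
      if IsCoprime N Δ then 1 else 0 := by
  split_ifs with h
  · have : (box F Δ.natDegree).filter (fun C => C ∣ Δ ∧ C ∣ N) = {1} := by
      ext C
      simp only [Finset.mem_filter, mem_box, Finset.mem_singleton]
      constructor
      · rintro ⟨⟨hm, _⟩, h1, h2⟩
        exact hm.eq_one_of_isUnit (h.isUnit_of_dvd' h2 h1)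
      · rintro rfl
        simp [monic_one]
    rw [this, Finset.sum_singleton]
    unfold polyMoebius
    simp
  · have : ∃ P, Prime P ∧ P ∣ N ∧ P ∣ Δ := by
      by_contra hc
      push Not at hc
      exact h ((coprime_ne hΔ).2 hc)
    obtain ⟨P₀, hP₀, hPN₀, hPΔ₀⟩ := this
    obtain ⟨P, hP, hPm, hPN, hPΔ⟩ : ∃ P : F[X], Prime P ∧ P.Monic ∧ P ∣ N ∧ P ∣ Δ :=
      ⟨normalize P₀, (associated_normalize P₀).prime hP₀, monic_normalize hP₀.ne_zero,
        normalize_dvd_iff.2 hPN₀, normalize_dvd_iff.2 hPΔ₀⟩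
    have hs : ∑ C ∈ (box F Δ.natDegree).filter (fun C => C ∣ Δ ∧ C ∣ N), polyMoebius C =
        ∑ C ∈ ((box F Δ.natDegree).filter (fun C => C ∣ Δ ∧ C ∣ N)).filter Squarefree,
          polyMoebius C := by
      symm
      apply Finset.sum_filter_of_ne
      intro C _ hC
      by_contra hn
      exact hC (by unfold polyMoebius; rw [if_neg hn])
    rw [hs]
    have hmem : ∀ C, C ∈ ((box F Δ.natDegree).filter (fun C => C ∣ Δ ∧ C ∣ N)).filter Squarefree ↔
        C.Monic ∧ C ∣ Δ ∧ C ∣ N ∧ Squarefree C := by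
      intro C
      simp only [Finset.mem_filter, mem_box]
      constructor
      · tauto
      · rintro ⟨h1, h2, h3, h4⟩
        exact ⟨⟨⟨h1, natDegree_le_of_dvd h2 hΔ⟩, h2, h3⟩, h4⟩
    have hdiv : ∀ c, P * c / P = c := fun c => mul_div_cancel_left₀ c hP.ne_zero
    have hnd : ∀ c, Squarefree (P * c) → ¬ P ∣ c := by
      intro c hc hd
      exact hP.not_isUnit (hc P (mul_dvd_mul_left P hd))
    have hsum : ∀ C, C ∈ ((box F Δ.natDegree).filter (fun C => C ∣ Δ ∧ C ∣ N)).filter Squarefree →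
      polyMoebius C + polyMoebius (if P ∣ C then C / P else P * C) = 0 := by
      intro C hC
      rw [hmem] at hC
      split_ifs with hd
      · obtain ⟨c, rfl⟩ := hd
        rw [hdiv, (moebius_mul_prime hP hC.2.2.2.of_mul_right (hnd c hC.2.2.2)).2]
        ring
      · rw [(moebius_mul_prime hP hC.2.2.2 hd).2]
        ring
    refine Finset.sum_involution (fun C _ => if P ∣ C then C / P else P * C) hsum ?_ ?_ ?_
    · intro C hC hne heq
      have := hsum C hC
      rw [heq] at this
      omega
    · intro C hC
      rw [hmem] at hC ⊢
      obtain ⟨h1, h2, h3, h4⟩ := hC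
      split_ifs with hd
      · obtain ⟨c, rfl⟩ := hd
        rw [hdiv]
        exact ⟨hPm.of_mul_monic_left h1, (Dvd.intro_left _ rfl).trans h2,
          (Dvd.intro_left _ rfl).trans h3, h4.of_mul_right⟩
      · have hc : IsCoprime P C := hP.irreducible.coprime_iff_not_dvd.2 hd
        exact ⟨hPm.mul h1, hc.mul_dvd hPΔ h2, hc.mul_dvd hPN h3, (moebius_mul_prime hP h4 hd).1⟩
    · intro C hC
      rw [hmem] at hC
      by_cases hd : P ∣ C
      · obtain ⟨c, rfl⟩ := hd
        simp only [dvd_mul_right, if_true, hdiv, hnd c hC.2.2.2, if_false]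
      · simp only [hd, if_false, dvd_mul_right, if_true, hdiv]

open Classical in
noncomputable def divs [Finite F] (Δ : F[X]) : Finset F[X] := (box F Δ.natDegree).filter (· ∣ Δ)

lemma mem_divs [Finite F] {Δ C : F[X]} (hΔ : Δ ≠ 0) : C ∈ divs Δ ↔ C.Monic ∧ C ∣ Δ := by
  simp only [divs, Finset.mem_filter, mem_box]
  exact ⟨fun h => ⟨h.1.1, h.2⟩, fun h => ⟨⟨h.1, natDegree_le_of_dvd h.2 hΔ⟩, h.2⟩⟩

open Classical in
noncomputable def A [Finite F] (Δ f : F[X]) (z : ℤ) : ℤ :=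
  ∑ N ∈ (M F z).filter (fun N => IsCoprime N Δ), jacSym N f

open Classical in
noncomputable def S [Finite F] (Δ f : F[X]) (z : ℤ) : ℤ :=
  ∑ N ∈ (M F z).filter (fun N => Squarefree N ∧ IsCoprime N Δ), jacSym N f

lemma M_neg [Finite F] {z : ℤ} (hz : z < 0) : M F z = ∅ := by
  ext p
  simp only [mem_M, Finset.notMem_empty, iff_false]
  rintro ⟨_, h⟩
  omega

lemma S_neg [Finite F] (Δ f : F[X]) {z : ℤ} (hz : z < 0) : S Δ f z = 0 := by
  simp [S, M_neg hz]

open Classical in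
lemma lemA [Finite F] {Δ : F[X]} (f : F[X]) (hΔ : Δ ≠ 0) (z : ℤ) :
    ∑ C ∈ divs Δ, polyMoebius C * jacSym C f * ∑ R ∈ M F (z - C.natDegree), jacSym R f = A Δ f z := by
  have h1 : A Δ f z = ∑ N ∈ M F z, ∑ C ∈ divs Δ, if C ∣ N then polyMoebius C * jacSym N f else 0 := by
    unfold A
    rw [Finset.sum_filter]
    refine Finset.sum_congr rfl fun N _ => ?_
    rw [← Finset.sum_filter, ← Finset.sum_mul, divs, Finset.filter_filter, moebius_sum hΔ]
    split_ifs <;> simp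
  rw [h1, Finset.sum_comm]
  refine Finset.sum_congr rfl fun C hC => ?_
  rw [mem_divs hΔ] at hC
  rw [← Finset.sum_filter, Finset.mul_sum]
  refine Finset.sum_nbij (fun R => C * R) ?_ ?_ ?_ ?_
  · intro R hR
    rw [mem_M] at hR
    rw [Finset.mem_filter, mem_M, hC.1.natDegree_mul hR.1]
    exact ⟨⟨hC.1.mul hR.1, by push_cast; omega⟩, dvd_mul_right _ _⟩
  · intro a _ b _ hab
    exact mul_left_cancel₀ hC.1.ne_zero hab
  · intro N hN
    rw [Finset.mem_coe, Finset.mem_filter, mem_M] at hN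
    obtain ⟨⟨h1, h2⟩, R, rfl⟩ := hN
    have hR := hC.1.of_mul_monic_left h1
    rw [hC.1.natDegree_mul hR] at h2
    refine ⟨R, ?_, rfl⟩
    rw [Finset.mem_coe, mem_M]
    exact ⟨hR, by push_cast at h2; omega⟩
  · intro R _
    rw [jacSym_mul, mul_assoc]

open Classical in
lemma A_eq [Finite F] {Δ f : F[X]} (hf : f ≠ 0) (z : ℤ) :
    A Δ f z = ∑ N ∈ (M F z).filter (fun N => IsCoprime N (Δ * f)), jacSym N f := by
  unfold A
  rw [Finset.sum_filter, Finset.sum_filter]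
  refine Finset.sum_congr rfl fun N _ => ?_
  rw [IsCoprime.mul_right_iff]
  by_cases h : IsCoprime N f
  · simp [h]
  · simp [h, jacSym_eq_zero hf h]

open Classical in
lemma S_eq [Finite F] {Δ f : F[X]} (hf : f ≠ 0) (z : ℤ) :
    S Δ f z = ∑ N ∈ (M F z).filter (fun N => Squarefree N ∧ IsCoprime N (Δ * f)), jacSym N f := by
  unfold S
  rw [Finset.sum_filter, Finset.sum_filter]
  refine Finset.sum_congr rfl fun N _ => ?_
  rw [IsCoprime.mul_right_iff]
  by_cases h : IsCoprime N f
  · simp [h]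
  · simp [h, jacSym_eq_zero hf h]

open Classical in
lemma lemB [Finite F] {Δ f : F[X]} (hf : f ≠ 0) (z : ℤ) (K : ℕ) (hz : z ≤ K) :
    A Δ f z = ∑ E ∈ (box F K).filter (fun E => IsCoprime E (Δ * f)), S Δ f (z - 2 * E.natDegree) := by
  rw [A_eq hf]
  simp only [S_eq hf]
  rw [Finset.sum_sigma']
  symm
  refine Finset.sum_nbij (fun x => x.2 * (x.1 * x.1)) ?_ ?_ ?_ ?_
  · rintro ⟨E, D⟩ h
    simp only [Finset.mem_sigma, Finset.mem_filter, mem_box, mem_M] at h ⊢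
    obtain ⟨⟨⟨e1, e2⟩, e3⟩, ⟨d1, d2⟩, d3, d4⟩ := h
    refine ⟨⟨d1.mul (e1.mul e1), ?_⟩, d4.mul_left (e3.mul_left e3)⟩
    rw [d1.natDegree_mul (e1.mul e1), e1.natDegree_mul e1]
    push_cast; omega
  · rintro ⟨E, D⟩ h ⟨E', D'⟩ h' heq
    simp only [Finset.mem_coe, Finset.mem_sigma, Finset.mem_filter, mem_box, mem_M] at h h'
    obtain ⟨rfl, rfl⟩ := sqf_unique h.1.1.1 h'.1.1.1 h.2.2.1 h'.2.2.1 heq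
    rfl
  · intro N hN
    rw [Finset.mem_coe, Finset.mem_filter, mem_M] at hN
    obtain ⟨⟨n1, n2⟩, n3⟩ := hN
    obtain ⟨D, E, d1, e1, d2, rfl⟩ := sqf_exists N n1
    rw [d1.natDegree_mul (e1.mul e1), e1.natDegree_mul e1] at n2
    refine ⟨⟨E, D⟩, ?_, rfl⟩
    simp only [Finset.mem_coe, Finset.mem_sigma, Finset.mem_filter, mem_box, mem_M]
    push_cast at n2
    exact ⟨⟨⟨e1, by omega⟩, n3.of_mul_left_right.of_mul_left_left⟩, ⟨d1, by omega⟩, d2, n3.of_mul_left_left⟩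
  · rintro ⟨E, D⟩ h
    simp only [Finset.mem_sigma, Finset.mem_filter] at h
    have hc : IsCoprime E f := h.1.2.of_mul_right_right
    rw [jacSym_mul, jacSym_sq hc, mul_one]

open Classical in
lemma lemC [Finite F] {h : F[X]} (hh : h ≠ 0) (φ : ℤ → ℤ) (hφ : ∀ w < 0, φ w = 0)
    (z : ℤ) (K : ℕ) (hz : z ≤ K) :
    ∑ C ∈ (box F K).filter (Smooth h), ∑ E ∈ (box F K).filter (fun E => IsCoprime E h),
      φ (z - 2 * C.natDegree - 2 * E.natDegree) = ∑ B ∈ box F K, φ (z - 2 * B.natDegree) := by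
  rw [Finset.sum_sigma']
  rw [← Finset.sum_filter_of_ne (p := fun x => x.1.natDegree + x.2.natDegree ≤ K)]
  · refine Finset.sum_nbij (fun x => x.1 * x.2) ?_ ?_ ?_ ?_
    · rintro ⟨C, E⟩ H
      simp only [Finset.mem_sigma, Finset.mem_filter, mem_box] at H ⊢
      refine ⟨H.1.1.1.1.mul H.1.2.1.1, ?_⟩
      rw [H.1.1.1.1.natDegree_mul H.1.2.1.1]
      exact H.2
    · rintro ⟨C, E⟩ H ⟨C', E'⟩ H' heq
      simp only [Finset.mem_coe, Finset.mem_sigma, Finset.mem_filter, mem_box] at H H'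
      obtain ⟨rfl, rfl⟩ := split_unique H.1.1.1.1 H.1.2.1.1 H'.1.1.1.1 H'.1.2.1.1
        H.1.1.2 H.1.2.2 H'.1.1.2 H'.1.2.2 heq
      rfl
    · intro B hB
      rw [Finset.mem_coe, mem_box] at hB
      obtain ⟨C, E, c, e, hC, hE, rfl⟩ := split_exists hh B hB.1
      rw [c.natDegree_mul e] at hB
      refine ⟨⟨C, E⟩, ?_, rfl⟩
      simp only [Finset.mem_coe, Finset.mem_sigma, Finset.mem_filter, mem_box]
      exact ⟨⟨⟨⟨c, by omega⟩, hC⟩, ⟨e, by omega⟩, hE⟩, hB.2⟩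
    · rintro ⟨C, E⟩ H
      simp only [Finset.mem_sigma, Finset.mem_filter, mem_box] at H
      rw [H.1.1.1.1.natDegree_mul H.1.2.1.1]
      congr 1
      push_cast; ring
  · rintro ⟨C, E⟩ _ hne
    by_contra hc
    exact hne (hφ _ (by simp only at hc ⊢; omega))

lemma lemD [Fintype F] (φ : ℤ → ℤ) (z : ℤ) (K : ℕ) :
    ∑ B ∈ box F K, φ (z - 2 * B.natDegree) =
      ∑ k ∈ Finset.range (K + 1), (Fintype.card F : ℤ) ^ k * φ (z - 2 * k) := by
  classical
  rw [← Finset.sum_fiberwise_of_maps_to (s := box F K) (t := Finset.range (K + 1))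
    (g := fun B => B.natDegree) (fun B hB => by
      rw [mem_box] at hB; rw [Finset.mem_range]; omega)]
  refine Finset.sum_congr rfl fun k hk => ?_
  have : (box F K).filter (fun B => B.natDegree = k) = M F (k : ℤ) := by
    ext p
    rw [Finset.mem_range] at hk
    simp only [Finset.mem_filter, mem_box, mem_M]
    constructor
    · rintro ⟨⟨h1, h2⟩, h3⟩; exact ⟨h1, by omega⟩
    · rintro ⟨h1, h2⟩; exact ⟨⟨h1, by omega⟩, by omega⟩
  rw [this, Finset.sum_congr rfl (g := fun _ => φ (z - 2 * k)) (fun B hB => by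
    rw [mem_M] at hB; rw [hB.2])]
  rw [Finset.sum_const, card_M]
  simp

lemma telescope (φ : ℤ → ℤ) (hφ : ∀ w < 0, φ w = 0) (q z : ℤ) (K : ℕ) (hz : z ≤ K) :
    ∑ k ∈ Finset.range (K + 1), q ^ k * φ (z - 2 * k) -
      q * ∑ k ∈ Finset.range (K + 1), q ^ k * φ (z - 2 - 2 * k) = φ z := by
  have h1 := Finset.sum_range_succ' (fun k : ℕ => q ^ k * φ (z - 2 * k)) (K + 1)
  have h2 := Finset.sum_range_succ (fun k : ℕ => q ^ k * φ (z - 2 * k)) (K + 1)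
  have h3 : φ (z - 2 * ((K + 1 : ℕ) : ℤ)) = 0 := hφ _ (by push_cast; omega)
  rw [h3] at h2
  rw [h2] at h1
  rw [Finset.mul_sum]
  have h4 : ∑ k ∈ Finset.range (K + 1), q * (q ^ k * φ (z - 2 - 2 * k)) =
      ∑ k ∈ Finset.range (K + 1), q ^ (k + 1) * φ (z - 2 * ((k + 1 : ℕ) : ℤ)) := by
    refine Finset.sum_congr rfl fun k _ => ?_
    rw [show z - 2 * ((k + 1 : ℕ) : ℤ) = z - 2 - 2 * k by push_cast; ring]
    ring
  rw [h4]
  simp at h1 ⊢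
  linarith

/-- one of the two terms on the right-hand side -/
lemma term_eq [Fintype F] {Δ f : F[X]} (hΔ : Δ ≠ 0) (hf : f ≠ 0) (z : ℤ) (K : ℕ) (hz : z ≤ K) :
    (∑' C₁ : {C₁ : Polynomial F // C₁.Monic ∧ C₁ ∣ Δ},
      polyMoebius (C₁ : Polynomial F) * jacSym (C₁ : Polynomial F) f *
        ∑' C₂ : {C₂ : Polynomial F // C₂.Monic ∧
            ∀ P : Polynomial F, Prime P → P ∣ (C₂ : Polynomial F) → P ∣ Δ * f},
          ∑' R : {R : Polynomial F // R.Monic ∧ ((R : Polynomial F).natDegree : ℤ) =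
              z - ((C₁ : Polynomial F).natDegree : ℤ) -
                2 * ((C₂ : Polynomial F).natDegree : ℤ)},
            jacSym (R : Polynomial F) f) =
    ∑ k ∈ Finset.range (K + 1), (Fintype.card F : ℤ) ^ k * S Δ f (z - 2 * k) := by
  classical
  have hR : ∀ w : ℤ, ∑' R : {R : Polynomial F // R.Monic ∧ ((R : Polynomial F).natDegree : ℤ) = w},
      jacSym (R : Polynomial F) f = ∑ R ∈ M F w, jacSym R f := fun w =>
    tsum_fin _ (M F w) (fun R => jacSym R f) (fun x hx => mem_M.1 hx)
      (fun x hx hn => absurd (mem_M.2 hx) hn)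
  simp only [hR]
  have hC2 : ∀ d : ℕ, ∑' C₂ : {C₂ : Polynomial F // C₂.Monic ∧
            ∀ P : Polynomial F, Prime P → P ∣ (C₂ : Polynomial F) → P ∣ Δ * f},
          ∑ R ∈ M F (z - (d : ℤ) - 2 * ((C₂ : Polynomial F).natDegree : ℤ)), jacSym R f =
        ∑ C₂ ∈ (box F K).filter (Smooth (Δ * f)),
          ∑ R ∈ M F (z - (d : ℤ) - 2 * (C₂.natDegree : ℤ)), jacSym R f := by
    intro d
    refine tsum_fin _ _ (fun C₂ : F[X] =>
      ∑ R ∈ M F (z - (d : ℤ) - 2 * (C₂.natDegree : ℤ)), jacSym R f) ?_ ?_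
    · intro x hx
      rw [Finset.mem_filter, mem_box] at hx
      exact ⟨hx.1.1, hx.2⟩
    · intro x hx hn
      have : K < x.natDegree := by
        by_contra hc
        exact hn (by rw [Finset.mem_filter, mem_box]; exact ⟨⟨hx.1, by omega⟩, hx.2⟩)
      rw [M_neg (by omega), Finset.sum_empty]
  simp only [hC2]
  rw [tsum_fin _ (divs Δ) (fun C₁ : F[X] => polyMoebius C₁ * jacSym C₁ f *
    ∑ C₂ ∈ (box F K).filter (Smooth (Δ * f)),
          ∑ R ∈ M F (z - (C₁.natDegree : ℤ) - 2 * (C₂.natDegree : ℤ)), jacSym R f)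
    (fun x hx => (mem_divs hΔ).1 hx) (fun x hx hn => absurd ((mem_divs hΔ).2 hx) hn)]
  simp only [Finset.mul_sum (s := (box F K).filter (Smooth (Δ * f)))]
  rw [Finset.sum_comm]
  have h1 : ∀ C₂ : F[X], ∑ C₁ ∈ divs Δ, polyMoebius C₁ * jacSym C₁ f *
      ∑ R ∈ M F (z - (C₁.natDegree : ℤ) - 2 * (C₂.natDegree : ℤ)), jacSym R f =
      ∑ E ∈ (box F K).filter (fun E => IsCoprime E (Δ * f)),
        S Δ f (z - 2 * C₂.natDegree - 2 * E.natDegree) := by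
    intro C₂
    rw [← lemB hf _ K (by omega), ← lemA f hΔ]
    refine Finset.sum_congr rfl fun C₁ _ => ?_
    rw [sub_right_comm]
  simp only [h1]
  rw [lemC (mul_ne_zero hΔ hf) (S Δ f) (fun w hw => S_neg Δ f hw) z K hz, lemD]

end CharSum

/-- The character sum over square-free monic `D` of degree `2g+1` coprime to `Δ`
expressed via sums over all monic polynomials:
`∑_{D ∈ H*_{2g+1}} χ_D(f)
  = ∑_{C₁ ∣ Δ} μ(C₁) χ_{C₁}(f) ∑_{C₂ ∣ (Δf)^∞} ∑_{deg R = 2g+1-deg C₁-2 deg C₂} χ_R(f)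
  - q ∑_{C₁ ∣ Δ} μ(C₁) χ_{C₁}(f) ∑_{C₂ ∣ (Δf)^∞} ∑_{deg R = 2g-1-deg C₁-2 deg C₂} χ_R(f)`. -/
theorem char_sum_squarefree_to_monic {F : Type*} [Field F] [Fintype F]
    (hq4 : Fintype.card F % 4 = 1) (Δ f : Polynomial F) (hΔ : Δ ≠ 0) (hf : f.Monic)
    (g : ℕ) :
    ∑' D : {D : Polynomial F // D.Monic ∧ Squarefree (D : Polynomial F) ∧
        IsCoprime (D : Polynomial F) Δ ∧ (D : Polynomial F).natDegree = 2 * g + 1},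
      jacSym (D : Polynomial F) f =
    (∑' C₁ : {C₁ : Polynomial F // C₁.Monic ∧ C₁ ∣ Δ},
      polyMoebius (C₁ : Polynomial F) * jacSym (C₁ : Polynomial F) f *
        ∑' C₂ : {C₂ : Polynomial F // C₂.Monic ∧
            ∀ P : Polynomial F, Prime P → P ∣ (C₂ : Polynomial F) → P ∣ Δ * f},
          ∑' R : {R : Polynomial F // R.Monic ∧ ((R : Polynomial F).natDegree : ℤ) =
              2 * g + 1 - ((C₁ : Polynomial F).natDegree : ℤ) -
                2 * ((C₂ : Polynomial F).natDegree : ℤ)},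
            jacSym (R : Polynomial F) f) -
    (Fintype.card F : ℤ) *
    (∑' C₁ : {C₁ : Polynomial F // C₁.Monic ∧ C₁ ∣ Δ},
      polyMoebius (C₁ : Polynomial F) * jacSym (C₁ : Polynomial F) f *
        ∑' C₂ : {C₂ : Polynomial F // C₂.Monic ∧
            ∀ P : Polynomial F, Prime P → P ∣ (C₂ : Polynomial F) → P ∣ Δ * f},
          ∑' R : {R : Polynomial F // R.Monic ∧ ((R : Polynomial F).natDegree : ℤ) =
              2 * g - 1 - ((C₁ : Polynomial F).natDegree : ℤ) -
                2 * ((C₂ : Polynomial F).natDegree : ℤ)},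
            jacSym (R : Polynomial F) f) := by
  have e1 := CharSum.term_eq hΔ hf.ne_zero (2 * (g : ℤ) + 1) (2 * g + 1) (by push_cast; omega)
  have e2 := CharSum.term_eq hΔ hf.ne_zero (2 * (g : ℤ) - 1) (2 * g + 1) (by push_cast; omega)
  rw [e1, e2]
  have e3 := CharSum.telescope (CharSum.S Δ f) (fun w hw => CharSum.S_neg Δ f hw)
    (Fintype.card F : ℤ) (2 * (g : ℤ) + 1) (2 * g + 1) (by push_cast; omega)
  rw [show (2 * (g : ℤ) + 1 - 2) = 2 * (g : ℤ) - 1 by ring] at e3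
  rw [e3]
  classical
  unfold CharSum.S
  refine CharSum.tsum_fin _ _ (fun D : F[X] => jacSym D f) ?_ ?_
  · intro D hD
    rw [Finset.mem_filter, CharSum.mem_M] at hD
    exact ⟨hD.1.1, hD.2.1, hD.2.2, by have := hD.1.2; omega⟩
  · intro D hD hn
    refine absurd ?_ hn
    rw [Finset.mem_filter, CharSum.mem_M]
    exact ⟨⟨hD.1, by rw [hD.2.2.2]; push_cast; ring⟩, hD.2.1, hD.2.2.1⟩
end

section
/- Chebyshev-type bound for character sums over square-free polynomials: let h, l be positive integers with 2hl ≤ 2g+1, and let a(P) be arbitrary complex numbers indexed by monic irreducible polynomials P of degree ≤ h. Then Σ_{D ∈ H*_{2g+1}} | Σ_{deg P ≤ h} χ_D(P) a(P)/|P|^{1/2} |^{2l} ≪ q^{2g} · (2l)!/(l! 2^l) · ( Σ_{deg P ≤ h} |a(P)|²/|P| )^l. -/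
open Polynomial UniqueFactorizationMonoid

lemma sum_even_range (f : ℕ → ℝ) (hf : ∀ k, Odd k → f k = 0) (m : ℕ) :
    ∑ k ∈ Finset.range (2 * m + 1), f k = ∑ k ∈ Finset.range (m + 1), f (2 * k) := by
  induction m with
  | zero => simp
  | succ m ih =>
    rw [Finset.sum_range_succ _ (m + 1), ← ih, show 2 * (m + 1) + 1 = 2 * m + 1 + 1 + 1 by ring,
      Finset.sum_range_succ, Finset.sum_range_succ, hf (2 * m + 1) ⟨m, rfl⟩]
    rw [show 2 * m + 1 + 1 = 2 * (m + 1) by ring]; ring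

/-- sign of a boolean -/
def sgn (b : Bool) : ℝ := if b then 1 else -1

lemma sgn_not (b : Bool) : sgn (!b) = - sgn b := by cases b <;> simp [sgn]

lemma sgn_sq (b : Bool) : sgn b ^ 2 = 1 := by cases b <;> simp [sgn]

open Classical in
/-- flip one coordinate -/
noncomputable def flipAt {S : Type*} (p : S) : (S → Bool) → (S → Bool) :=
  fun ε => Function.update ε p (!(ε p))

lemma flipAt_invol {S : Type*} (p : S) : Function.Involutive (flipAt p) := by
  intro ε; simp [flipAt]

open Classical in
lemma sgn_flipAt {S : Type*} (p Q : S) (ε : S → Bool) :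
    sgn (flipAt p ε Q) = (if Q = p then -1 else 1) * sgn (ε Q) := by
  by_cases h : Q = p
  · subst h; simp [flipAt, sgn_not]
  · simp [flipAt, h]

open Classical in
lemma radem {S : Type*} [Fintype S] (b : S → ℝ) (T : Finset S) : ∀ m : ℕ,
    ∑ ε : S → Bool, (∑ P ∈ T, sgn (ε P) * b P) ^ (2 * m) ≤
      Fintype.card (S → Bool) * ((2 * m).factorial / (m.factorial * 2 ^ m) : ℝ) *
        (∑ P ∈ T, b P ^ 2) ^ m := by
  induction T using Finset.induction_on with
  | empty =>
    intro m
    rcases Nat.eq_zero_or_pos m with rfl | hm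
    · simp
    · simp [hm.ne']
  | insert p T hp ih =>
    intro m
    simp only [Finset.sum_insert hp]
    set N : ℝ := ((Fintype.card (S → Bool) : ℕ) : ℝ) with hN
    set V := ∑ P ∈ T, b P ^ 2 with hV
    have h1 : ∑ ε : S → Bool, (sgn (ε p) * b p + ∑ P ∈ T, sgn (ε P) * b P) ^ (2 * m)
        = ∑ k ∈ Finset.range (2 * m + 1), ∑ ε : S → Bool,
          (sgn (ε p) * b p) ^ k * (∑ P ∈ T, sgn (ε P) * b P) ^ (2 * m - k) *
            ((2 * m).choose k : ℝ) := by
      rw [Finset.sum_comm]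
      exact Finset.sum_congr rfl fun ε _ => add_pow _ _ _
    rw [h1, sum_even_range]
    · rw [add_pow, Finset.mul_sum]
      apply Finset.sum_le_sum
      intro k hk
      have hk' : k ≤ m := by simpa [Nat.lt_succ_iff] using hk
      have h2 : ∀ ε : S → Bool, (sgn (ε p) * b p) ^ (2 * k) = (b p ^ 2) ^ k := by
        intro ε
        rw [pow_mul, mul_pow, sgn_sq, one_mul]
      simp only [h2]
      rw [← Finset.sum_mul, ← Finset.mul_sum, ← Nat.mul_sub]
      calc _ ≤ (b p ^ 2) ^ k * (N * ((2 * (m - k)).factorial / ((m - k).factorial * 2 ^ (m - k)) : ℝ) * V ^ (m - k)) * ((2 * m).choose (2 * k) : ℝ) := by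
            gcongr
            exact ih (m - k)
        _ = (b p ^ 2) ^ k * V ^ (m - k) * N * (((2 * (m - k)).factorial / ((m - k).factorial * 2 ^ (m - k)) : ℝ) * ((2 * m).choose (2 * k) : ℝ)) := by ring
        _ ≤ (b p ^ 2) ^ k * V ^ (m - k) * N * (((2 * m).factorial / (m.factorial * 2 ^ m) : ℝ) * (m.choose k : ℝ)) := by
            have hV0 : 0 ≤ V := Finset.sum_nonneg fun _ _ => sq_nonneg _
            apply mul_le_mul_of_nonneg_left _ (by positivity)
            obtain ⟨j, rfl⟩ := Nat.exists_eq_add_of_le hk'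
            have e1 := Nat.add_choose_mul_factorial_mul_factorial k j
            have e2 := Nat.add_choose_mul_factorial_mul_factorial (2 * k) (2 * j)
            rw [show 2 * k + 2 * j = 2 * (k + j) by ring] at e2
            rw [Nat.add_sub_cancel_left]
            rw [← Nat.choose_symm_add] at e1
            rw [show (2 * (k + j)).choose (2 * j) = (2 * (k + j)).choose (2 * k) from by
              rw [mul_add]; exact Nat.choose_symm_add.symm] at e2
            rw [← e1, ← e2, pow_add]
            have c1 : (0 : ℝ) < ((k + j).choose k : ℝ) := by exact_mod_cast Nat.choose_pos (by omega)
            have f1 : (2 : ℝ) ^ k * k.factorial ≤ (2 * k).factorial := by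
              have : 2 ^ k * k.factorial ≤ (2 * k).factorial := by
                clear * -
                induction k with
                | zero => simp
                | succ k ih =>
                  rw [show 2 * (k + 1) = 2 * k + 1 + 1 by ring, Nat.factorial_succ,
                    Nat.factorial_succ, Nat.factorial_succ, pow_succ]
                  nlinarith [Nat.zero_le ((2 * k).factorial), Nat.zero_le (k * (2 * k).factorial), Nat.zero_le (k * k * (2 * k).factorial), Nat.mul_le_mul_left k ih]
              exact_mod_cast this
            have g1 : (0 : ℝ) < k.factorial := by exact_mod_cast Nat.factorial_pos _
            have g2 : (0 : ℝ) < j.factorial := by exact_mod_cast Nat.factorial_pos _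
            push_cast
            have : ((2 * (k + j)).choose (2 * k) * (2 * k).factorial * (2 * j).factorial /
                ((k + j).choose k * k.factorial * j.factorial * (2 ^ k * 2 ^ j)) * ((k + j).choose k) : ℝ)
                = ((2 * j).factorial / (j.factorial * 2 ^ j) * (2 * (k + j)).choose (2 * k)) *
                 ((2 * k).factorial / (2 ^ k * k.factorial)) := by
              field_simp
            rw [this]
            apply le_mul_of_one_le_right (by positivity)
            rw [one_le_div (by positivity)]
            exact f1
        _ = _ := by ring
    · intro k hk
      have hflip : ∀ ε : S → Bool, (sgn (flipAt p ε p) * b p) ^ k *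
          (∑ P ∈ T, sgn (flipAt p ε P) * b P) ^ (2 * m - k) * ((2 * m).choose k : ℝ)
          = - ((sgn (ε p) * b p) ^ k *
          (∑ P ∈ T, sgn (ε P) * b P) ^ (2 * m - k) * ((2 * m).choose k : ℝ)) := by
        intro ε
        have : ∑ P ∈ T, sgn (flipAt p ε P) * b P = ∑ P ∈ T, sgn (ε P) * b P := by
          apply Finset.sum_congr rfl
          intro P hP
          have : P ≠ p := fun h => hp (h ▸ hP)
          simp [sgn_flipAt, this]
        rw [this, sgn_flipAt, if_pos rfl, neg_one_mul, neg_mul, hk.neg_pow]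
        ring
      have := Equiv.sum_comp (flipAt_invol p).toPerm (fun ε : S → Bool => (sgn (ε p) * b p) ^ k *
          (∑ P ∈ T, sgn (ε P) * b P) ^ (2 * m - k) * ((2 * m).choose k : ℝ))
      simp only [Function.Involutive.coe_toPerm, hflip, Finset.sum_neg_distrib] at this
      linarith

open Classical in
lemma flip_sum_zero {S X ι : Type*} [Fintype X] [Fintype ι] (x : X → S → ℝ) (f : ι → S)
    (p : S) (hodd : Odd (Finset.univ.filter (fun i => f i = p)).card) (σ : X ≃ X)
    (hσ : ∀ D i, x (σ D) (f i) = (if f i = p then -1 else 1) * x D (f i)) :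
    ∑ D, ∏ i, x D (f i) = 0 := by
  have := Equiv.sum_comp σ (fun D => ∏ i, x D (f i))
  simp only [hσ, Finset.prod_mul_distrib] at this
  rw [Finset.prod_ite] at this
  simp [hodd.neg_one_pow] at this
  linarith

open Classical in
lemma moment_abs {S X : Type*} [Fintype X] [Fintype S] (x : X → S → ℝ)
    (hx : ∀ D P, |x D P| ≤ 1) (l : ℕ)
    (hflip : ∀ (f : Fin l ⊕ Fin l → S) (p : S),
      Odd (Finset.univ.filter (fun i => f i = p)).card → ∑ D, ∏ i, x D (f i) = 0)
    (b : S → ℂ) :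
    ∑ D, ‖∑ P, (x D P : ℂ) * b P‖ ^ (2 * l) ≤ Fintype.card X *
      ((2 * l).factorial / (l.factorial * 2 ^ l) : ℝ) * (∑ P, ‖b P‖ ^ 2) ^ l := by
  set N : ℝ := ((Fintype.card (S → Bool) : ℕ) : ℝ) with hN
  have hNpos : 0 < N := by rw [hN]; exact_mod_cast Fintype.card_pos
  set c : Fin l ⊕ Fin l → S → ℂ := Sum.elim (fun _ => b) (fun _ P => star (b P)) with hc
  have hcn : ∀ i P, ‖c i P‖ = ‖b P‖ := by
    rintro (i | i) P <;> simp [hc]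
  have hexp : ∀ D, ((‖∑ P, (x D P : ℂ) * b P‖ ^ (2 * l) : ℝ) : ℂ) =
      ∑ f : Fin l ⊕ Fin l → S, (∏ i, (x D (f i) : ℂ)) * ∏ i, c i (f i) := by
    intro D
    have : ∏ i : Fin l ⊕ Fin l, ∑ P, (x D P : ℂ) * c i P =
        ((‖∑ P, (x D P : ℂ) * b P‖ ^ (2 * l) : ℝ) : ℂ) := by
      rw [Fintype.prod_sum_type]
      simp only [hc, Sum.elim_inl, Sum.elim_inr, Finset.prod_const, Finset.card_univ,
        Fintype.card_fin]
      have : ∑ P, (x D P : ℂ) * star (b P) = star (∑ P, (x D P : ℂ) * b P) := by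
        rw [star_sum]; simp [mul_comm]
      have h2 := Complex.mul_conj' (∑ P, (x D P : ℂ) * b P)
      rw [this, ← mul_pow, Complex.ofReal_pow, pow_mul, ← h2]
      rfl
    rw [← this, Finset.prod_univ_sum]
    simp [Finset.prod_mul_distrib, Fintype.piFinset_univ]
  have hkey : ∀ f : Fin l ⊕ Fin l → S, N * |∑ D, ∏ i, x D (f i)| ≤
      Fintype.card X * ∑ ε : S → Bool, ∏ i, sgn (ε (f i)) := by
    intro f
    by_cases h : ∃ p, Odd (Finset.univ.filter (fun i => f i = p)).card
    · obtain ⟨p, hp⟩ := h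
      rw [hflip f p hp]
      have := flip_sum_zero (fun (ε : S → Bool) P => sgn (ε P)) f p hp
        (flipAt_invol p).toPerm (by intro ε i; exact sgn_flipAt _ _ _)
      rw [this]; simp
    · push Not at h
      have e1 : ∀ ε : S → Bool, ∏ i, sgn (ε (f i)) = 1 := by
        intro ε
        rw [Finset.prod_comp (fun P => sgn (ε P)) f]
        apply Finset.prod_eq_one
        intro P _
        obtain ⟨k, hk⟩ := Nat.not_odd_iff_even.1 (h P)
        rw [hk, ← two_mul, pow_mul, sgn_sq, one_pow]
      simp only [e1]
      rw [mul_comm]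
      have : |∑ D, ∏ i, x D (f i)| ≤ Fintype.card X := by
        refine (Finset.abs_sum_le_sum_abs _ _).trans ?_
        refine (Finset.sum_le_card_nsmul _ _ 1 ?_).trans ?_
        · intro D _
          rw [Finset.abs_prod]
          exact Finset.prod_le_one (fun _ _ => abs_nonneg _) (fun _ _ => hx _ _)
        · simp
      simp only [Finset.sum_const, Finset.card_univ, nsmul_eq_mul, mul_one]
      rw [← hN]
      gcongr
  have hmain : N * ∑ D, ‖∑ P, (x D P : ℂ) * b P‖ ^ (2 * l) ≤
      Fintype.card X * ∑ ε : S → Bool, (∑ P, sgn (ε P) * ‖b P‖) ^ (2 * l) := by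
    have h1 : ∑ D, ‖∑ P, (x D P : ℂ) * b P‖ ^ (2 * l) ≤
        ∑ f : Fin l ⊕ Fin l → S, |∑ D, ∏ i, x D (f i)| * ∏ i, ‖b (f i)‖ := by
      have e : ((∑ D, ‖∑ P, (x D P : ℂ) * b P‖ ^ (2 * l) : ℝ) : ℂ) =
        ∑ f : Fin l ⊕ Fin l → S, ((∑ D, ∏ i, x D (f i) : ℝ) : ℂ) * ∏ i, c i (f i) := by
        rw [Complex.ofReal_sum]
        simp only [hexp]
        rw [Finset.sum_comm]
        apply Finset.sum_congr rfl
        intro f _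
        rw [← Finset.sum_mul]
        push_cast
        rfl
      have e2 := congrArg norm e
      rw [Complex.norm_real, Real.norm_of_nonneg (by positivity)] at e2
      rw [e2]
      refine (norm_sum_le _ _).trans (Finset.sum_le_sum fun f _ => ?_)
      rw [norm_mul, Complex.norm_real, norm_prod]
      simp [hcn]
    have h2 : ∀ ε : S → Bool, (∑ P, sgn (ε P) * ‖b P‖) ^ (2 * l) =
        ∑ f : Fin l ⊕ Fin l → S, (∏ i, sgn (ε (f i))) * ∏ i, ‖b (f i)‖ := by
      intro ε
      have : (∑ P, sgn (ε P) * ‖b P‖) ^ (2 * l) =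
        ∏ i : Fin l ⊕ Fin l, ∑ P, sgn (ε P) * ‖b P‖ := by
        simp [two_mul]
      rw [this, Finset.prod_univ_sum]
      simp [Finset.prod_mul_distrib, Fintype.piFinset_univ]
    simp only [h2]
    rw [Finset.sum_comm]
    simp only [← Finset.sum_mul]
    refine (mul_le_mul_of_nonneg_left h1 hNpos.le).trans ?_
    rw [Finset.mul_sum, Finset.mul_sum]
    apply Finset.sum_le_sum
    intro f _
    rw [← mul_assoc, ← mul_assoc]
    exact mul_le_mul_of_nonneg_right (hkey f) (by positivity)
  have hr := radem (fun P => ‖b P‖) Finset.univ l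
  rw [← hN] at hr
  refine le_of_mul_le_mul_left (hmain.trans ?_) hNpos
  calc _ ≤ (Fintype.card X : ℝ) * (N * ((2 * l).factorial / (l.factorial * 2 ^ l) : ℝ) *
        (∑ P, ‖b P‖ ^ 2) ^ l) := by gcongr
    _ = _ := by ring

section poly
variable {F : Type*} [Field F]

lemma legSym_congr {P f f' : F[X]} (h : P ∣ f - f') : legSym P f = legSym P f' := by
  have h1 : P ∣ f ↔ P ∣ f' := (dvd_iff_dvd_of_dvd_sub h)
  have h2 : ∀ g, P ∣ g * g - f ↔ P ∣ g * g - f' := by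
    intro g
    apply dvd_iff_dvd_of_dvd_sub
    have : g * g - f - (g * g - f') = -(f - f') := by ring
    rw [this]; exact (dvd_neg).2 h
  have h3 : (∃ g, P ∣ g * g - f) ↔ (∃ g, P ∣ g * g - f') := exists_congr h2
  unfold legSym
  by_cases a1 : P ∣ f' <;> by_cases a2 : ∃ g, P ∣ g * g - f' <;>
    simp only [h1, h3, a1, a2, if_true, if_false]

lemma legSym_assoc {P Q f : F[X]} (h : Associated P Q) : legSym P f = legSym Q f := by
  have h1 : P ∣ f ↔ Q ∣ f := h.dvd_iff_dvd_left
  have h3 : (∃ g, P ∣ g * g - f) ↔ (∃ g, Q ∣ g * g - f) :=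
    exists_congr fun g => h.dvd_iff_dvd_left
  unfold legSym
  by_cases a1 : Q ∣ f <;> by_cases a2 : ∃ g, Q ∣ g * g - f <;>
    simp only [h1, h3, a1, a2, if_true, if_false]

lemma jacSym_irr {P f : F[X]} (h : Irreducible P) : jacSym f P = legSym P f := by
  obtain ⟨Q, hQ, hf⟩ : ∃ Q, Associated P Q ∧ factors P = {Q} := by
    obtain ⟨Q, hQ⟩ := Multiset.card_eq_one.1 (card_factors_of_irreducible h)
    have h1 := factors_prod h.ne_zero
    rw [hQ, Multiset.prod_singleton] at h1
    exact ⟨Q, h1.symm, hQ⟩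
  rw [jacSym, hf]
  simp [legSym_assoc hQ]

lemma legSym_abs (P f : F[X]) : |((legSym P f : ℤ) : ℝ)| ≤ 1 := by
  unfold legSym; split_ifs <;> simp

open Classical in
lemma legSym_eq {P : F[X]} [Fact (Irreducible P)] [Fintype (AdjoinRoot P)] (f : F[X]) :
    legSym P f = quadraticChar (AdjoinRoot P) (AdjoinRoot.mk P f) := by
  rw [quadraticChar_apply, quadraticCharFun, legSym]
  have h : (∃ g, P ∣ g * g - f) ↔ IsSquare (AdjoinRoot.mk P f) := by
    constructor
    · rintro ⟨g, hg⟩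
      refine ⟨AdjoinRoot.mk P g, ?_⟩
      rw [← map_mul]
      exact (AdjoinRoot.mk_eq_mk.2 hg).symm
    · rintro ⟨r, hr⟩
      obtain ⟨g, rfl⟩ := AdjoinRoot.mk_surjective r
      refine ⟨g, ?_⟩
      rw [← map_mul] at hr
      exact AdjoinRoot.mk_eq_mk.1 hr.symm
  simp only [AdjoinRoot.mk_eq_zero, h]

lemma exists_nonres [Fintype F] (hq4 : Fintype.card F % 4 = 1) {P : F[X]} (hP : Irreducible P)
    (hm : P.Monic) : ∃ v : F[X], ¬ P ∣ v ∧ ∀ f, legSym P (v * f) = - legSym P f := by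
  classical
  have : Fact (Irreducible P) := ⟨hP⟩
  have := hm.finite_adjoinRoot
  have : Finite (AdjoinRoot P) := Module.finite_of_finite F
  have : Fintype (AdjoinRoot P) := Fintype.ofFinite _
  have hc : ringChar (AdjoinRoot P) ≠ 2 := by
    have h1 : ringChar F ≠ 2 := by
      intro h
      have := FiniteField.even_card_iff_char_two.1 h
      omega
    rwa [← Algebra.ringChar_eq F (AdjoinRoot P)]
  obtain ⟨a, ha⟩ := quadraticChar_exists_neg_one hc
  obtain ⟨v, rfl⟩ := AdjoinRoot.mk_surjective a
  refine ⟨v, ?_, ?_⟩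
  · intro h
    rw [← AdjoinRoot.mk_eq_zero] at h
    rw [h, quadraticChar_zero] at ha
    norm_num at ha
  · intro f
    rw [legSym_eq, legSym_eq, map_mul, map_mul, ha, neg_one_mul]

instance finX [Fintype F] (n : ℕ) : Finite {D : F[X] // D.Monic ∧ D.natDegree = n} := by
  refine Finite.of_injective (fun D (i : Fin (n + 1)) => D.1.coeff i) ?_
  rintro ⟨D, hD, hn⟩ ⟨E, hE, hn'⟩ h
  ext i
  by_cases hi : i < n + 1
  · exact congrFun h ⟨i, hi⟩
  · rw [coeff_eq_zero_of_natDegree_lt, coeff_eq_zero_of_natDegree_lt] <;> simp <;> omega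

lemma cardX [Fintype F] (n : ℕ) [Fintype {D : F[X] // D.Monic ∧ D.natDegree = n}] :
    Fintype.card {D : F[X] // D.Monic ∧ D.natDegree = n} ≤ Fintype.card F ^ (n + 1) := by
  classical
  have := Fintype.card_le_of_injective
    (fun (D : {D : F[X] // D.Monic ∧ D.natDegree = n}) (i : Fin (n + 1)) => D.1.coeff i) (by
      rintro ⟨D, hD, hn⟩ ⟨E, hE, hn'⟩ h
      ext i
      by_cases hi : i < n + 1
      · exact congrFun h ⟨i, hi⟩
      · rw [coeff_eq_zero_of_natDegree_lt, coeff_eq_zero_of_natDegree_lt] <;> simp <;> omega)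
  simpa using this

instance finS [Fintype F] (h : ℕ) :
    Finite {P : F[X] // P.Monic ∧ Irreducible P ∧ P.natDegree ≤ h} := by
  refine Finite.of_injective (fun D (i : Fin (h + 1)) => D.1.coeff i) ?_
  rintro ⟨D, hD, _, hn⟩ ⟨E, hE, _, hn'⟩ hh
  ext i
  by_cases hi : i < h + 1
  · exact congrFun hh ⟨i, hi⟩
  · rw [coeff_eq_zero_of_natDegree_lt, coeff_eq_zero_of_natDegree_lt] <;> simp <;> omega

lemma exists_sigma [Fintype F] (n : ℕ) (M u : F[X]) (hM : M.Monic) (hMn : M.natDegree ≤ n) (hu : IsCoprime M u) :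
    ∃ σ : {D : F[X] // D.Monic ∧ D.natDegree = n} ≃ {D : F[X] // D.Monic ∧ D.natDegree = n},
      ∀ D, M ∣ (σ D).1 - u * D.1 := by
  have hdvd : ∀ D : F[X], M ∣ D + ((u - 1) * D) %ₘ M - u * D := by
    intro D
    have := modByMonic_add_div ((u - 1) * D) M
    refine ⟨- (((u - 1) * D) /ₘ M), ?_⟩
    linear_combination this
  have hdeg : ∀ D : F[X], D.Monic → D.natDegree = n →
      (((u - 1) * D) %ₘ M).degree < D.degree := by
    intro D hD hn
    refine (degree_modByMonic_lt _ hM).trans_le ?_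
    rw [degree_eq_natDegree hM.ne_zero, degree_eq_natDegree hD.ne_zero, hn]
    exact_mod_cast hMn
  let s : {D : F[X] // D.Monic ∧ D.natDegree = n} → {D : F[X] // D.Monic ∧ D.natDegree = n} :=
    fun D => ⟨D.1 + ((u - 1) * D.1) %ₘ M, D.2.1.add_of_left (hdeg _ D.2.1 D.2.2), by
      rw [natDegree_eq_of_degree_eq (degree_add_eq_left_of_degree_lt (hdeg _ D.2.1 D.2.2))]
      exact D.2.2⟩
  have hs : Function.Injective s := by
    rintro ⟨D, hD⟩ ⟨E, hE⟩ h
    have h' : D + ((u - 1) * D) %ₘ M = E + ((u - 1) * E) %ₘ M := congrArg Subtype.val h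
    have h1 : M ∣ u * (D - E) := by
      have a := dvd_sub (hdvd E) (hdvd D)
      rw [h'] at a
      convert a using 1; ring
    have h2 : M ∣ D - E := hu.dvd_of_dvd_mul_left h1
    have h3 : ((u - 1) * D) %ₘ M = ((u - 1) * E) %ₘ M := by
      rw [← sub_eq_zero, ← sub_modByMonic, modByMonic_eq_zero_iff_dvd hM, ← mul_sub]
      exact h2.mul_left _
    rw [h3] at h'
    exact Subtype.ext (add_right_cancel h')
  exact ⟨Equiv.ofBijective s (Finite.injective_iff_bijective.1 hs), fun D => hdvd D.1⟩

open Classical in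
lemma char_vanish [Fintype F] (hq4 : Fintype.card F % 4 = 1) (n h l : ℕ) (hn : 2 * h * l ≤ n)
    [Fintype {D : F[X] // D.Monic ∧ D.natDegree = n}]
    (f : Fin l ⊕ Fin l → {P : F[X] // P.Monic ∧ Irreducible P ∧ P.natDegree ≤ h})
    (p : {P : F[X] // P.Monic ∧ Irreducible P ∧ P.natDegree ≤ h})
    (hodd : Odd (Finset.univ.filter (fun i => f i = p)).card) :
    ∑ D : {D : F[X] // D.Monic ∧ D.natDegree = n}, ∏ i, ((legSym (f i).1 D.1 : ℤ) : ℝ) = 0 := by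
  have hp : p ∈ Finset.univ.image f := by
    obtain ⟨i, hi⟩ := Finset.card_pos.1 hodd.pos
    simp only [Finset.mem_filter] at hi
    exact Finset.mem_image.2 ⟨i, Finset.mem_univ _, hi.2⟩
  set T := Finset.univ.image f with hT
  set M' : F[X] := ∏ P ∈ T.erase p, P.1 with hM'
  have hMM : p.1 * M' = ∏ P ∈ T, P.1 := Finset.mul_prod_erase T (fun P => P.1) hp
  have hM'm : M'.Monic := monic_prod_of_monic _ _ fun P _ => P.2.1
  have hcop : IsCoprime M' p.1 := by
    apply IsCoprime.prod_left
    intro P hP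
    rw [(P.2.2.1).coprime_iff_not_dvd]
    intro hd
    have := eq_of_monic_of_associated P.2.1 p.2.1 ((P.2.2.1).associated_of_dvd p.2.2.1 hd)
    exact (Finset.mem_erase.1 hP).1 (Subtype.ext this)
  obtain ⟨v, hv0, hv⟩ := exists_nonres hq4 p.2.2.1 p.2.1
  obtain ⟨a, b, hab⟩ := hcop
  set u := 1 + a * M' * (v - 1) with hu
  have hup : p.1 ∣ u - v := ⟨- b * (v - 1), by rw [hu]; linear_combination (v - 1) * hab⟩
  have hu1 : M' ∣ u - 1 := ⟨a * (v - 1), by rw [hu]; ring⟩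
  have hcu : IsCoprime (p.1 * M') u := by
    apply IsCoprime.mul_left
    · rw [(p.2.2.1).coprime_iff_not_dvd]
      intro hd
      exact hv0 ((dvd_iff_dvd_of_dvd_sub hup).1 hd)
    · refine ⟨-(a * (v - 1)), 1, ?_⟩
      rw [hu]; ring
  have hdeg : (p.1 * M').natDegree ≤ n := by
    rw [hMM]
    refine (natDegree_prod_le _ _).trans ((Finset.sum_le_card_nsmul _ _ h fun P _ => P.2.2.2).trans ?_)
    have : T.card ≤ 2 * l := by
      refine Finset.card_image_le.trans ?_
      simp [two_mul]
    calc T.card • h ≤ (2 * l) * h := Nat.mul_le_mul_right _ this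
      _ = 2 * h * l := by ring
      _ ≤ n := hn
  obtain ⟨σ, hσ⟩ := exists_sigma n (p.1 * M') u (p.2.1.mul hM'm) hdeg hcu
  refine flip_sum_zero (fun (D : {D : F[X] // D.Monic ∧ D.natDegree = n})
    (P : {P : F[X] // P.Monic ∧ Irreducible P ∧ P.natDegree ≤ h}) => ((legSym P.1 D.1 : ℤ) : ℝ))
    f p (by convert hodd) σ ?_
  intro D i
  have hfi : f i ∈ T := Finset.mem_image_of_mem _ (Finset.mem_univ _)
  have e1 : legSym (f i).1 (σ D).1 = legSym (f i).1 (u * D.1) := by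
    apply legSym_congr
    refine Dvd.dvd.trans ?_ (hσ D)
    rw [hMM]
    exact Finset.dvd_prod_of_mem (fun P => P.1) hfi
  simp only [e1]
  split_ifs with hc
  · rw [hc, legSym_congr (f' := v * D.1) (by rw [← sub_mul]; exact hup.mul_right _), hv]
    push_cast; ring
  · rw [legSym_congr (f' := D.1), one_mul]
    have : (f i).1 ∣ M' := Finset.dvd_prod_of_mem (fun P => P.1) (Finset.mem_erase.2 ⟨hc, hfi⟩)
    have e : u * D.1 - D.1 = (u - 1) * D.1 := by ring
    rw [e]
    exact (this.trans hu1).mul_right _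

end poly

/-- Chebyshev-type bound for character sums over square-free polynomials:
for `2hl ≤ 2g+1` and arbitrary complex numbers `a(P)`,
`∑_{D ∈ H*_{2g+1}} |∑_{deg P ≤ h} χ_D(P) a(P)/|P|^{1/2}|^{2l}
  ≪ q^{2g} (2l)!/(l! 2^l) (∑_{deg P ≤ h} |a(P)|²/|P|)^l`
with an absolute implied constant. -/
theorem char_sum_moment_bound {F : Type*} [Field F] [Fintype F]
    (hq4 : Fintype.card F % 4 = 1) (Δ : Polynomial F) (hΔ : Δ ≠ 0) :
    ∃ C : ℝ, 0 < C ∧ ∀ (g h l : ℕ), 0 < h → 0 < l → 2 * h * l ≤ 2 * g + 1 →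
      ∀ a : Polynomial F → ℂ,
      (∑' D : {D : Polynomial F // D.Monic ∧ Squarefree (D : Polynomial F) ∧
          IsCoprime (D : Polynomial F) Δ ∧ (D : Polynomial F).natDegree = 2 * g + 1},
        ‖∑' P : {P : Polynomial F // P.Monic ∧ Irreducible (P : Polynomial F) ∧
            (P : Polynomial F).natDegree ≤ h},
          (jacSym (D : Polynomial F) (P : Polynomial F) : ℂ) * a (P : Polynomial F) /
            (Real.sqrt ((Fintype.card F : ℝ) ^ (P : Polynomial F).natDegree) : ℂ)‖ ^
          (2 * l)) ≤
      C * (Fintype.card F : ℝ) ^ (2 * g) *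
        ((Nat.factorial (2 * l) : ℝ) / (Nat.factorial l * 2 ^ l)) *
        (∑' P : {P : Polynomial F // P.Monic ∧ Irreducible (P : Polynomial F) ∧
            (P : Polynomial F).natDegree ≤ h},
          ‖a (P : Polynomial F)‖ ^ 2 /
            ((Fintype.card F : ℝ) ^ (P : Polynomial F).natDegree)) ^ l := by
  classical
  have hq : (0 : ℝ) < Fintype.card F := by exact_mod_cast Fintype.card_pos
  refine ⟨(Fintype.card F : ℝ) ^ 2, by positivity, ?_⟩
  intro g h l _ _ hn a
  have : Fintype {P : F[X] // P.Monic ∧ Irreducible P ∧ P.natDegree ≤ h} := Fintype.ofFinite _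
  have : Fintype {D : F[X] // D.Monic ∧ D.natDegree = 2 * g + 1} := Fintype.ofFinite _
  simp only [tsum_fintype (L := SummationFilter.unconditional _)
    (β := {P : F[X] // P.Monic ∧ Irreducible P ∧ P.natDegree ≤ h})]
  let b : {P : F[X] // P.Monic ∧ Irreducible P ∧ P.natDegree ≤ h} → ℂ := fun P =>
    a P.1 / (Real.sqrt ((Fintype.card F : ℝ) ^ P.1.natDegree) : ℂ)
  let G : {D : F[X] // D.Monic ∧ D.natDegree = 2 * g + 1} → ℝ := fun D =>
    ‖∑ P : {P : F[X] // P.Monic ∧ Irreducible P ∧ P.natDegree ≤ h},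
      (((legSym P.1 D.1 : ℤ) : ℝ) : ℂ) * b P‖ ^ (2 * l)
  have hb : ∀ P, ‖b P‖ ^ 2 = ‖a P.1‖ ^ 2 / (Fintype.card F : ℝ) ^ P.1.natDegree := by
    intro P
    simp only [b]
    rw [norm_div, div_pow, Complex.norm_real, Real.norm_of_nonneg (Real.sqrt_nonneg _),
      Real.sq_sqrt (by positivity)]
  have key := moment_abs (fun (D : {D : F[X] // D.Monic ∧ D.natDegree = 2 * g + 1})
    (P : {P : F[X] // P.Monic ∧ Irreducible P ∧ P.natDegree ≤ h}) => ((legSym P.1 D.1 : ℤ) : ℝ))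
    (fun D P => legSym_abs _ _) l (fun f p hp => by
      convert char_vanish hq4 (2 * g + 1) h l hn f p (by convert hp)) b
  simp only [hb] at key
  have hsum : ∀ D : {D : Polynomial F // D.Monic ∧ Squarefree (D : Polynomial F) ∧
      IsCoprime (D : Polynomial F) Δ ∧ (D : Polynomial F).natDegree = 2 * g + 1},
      ‖∑ P : {P : F[X] // P.Monic ∧ Irreducible P ∧ P.natDegree ≤ h},
          (jacSym (D : Polynomial F) (P : Polynomial F) : ℂ) * a (P : Polynomial F) /
            (Real.sqrt ((Fintype.card F : ℝ) ^ (P : Polynomial F).natDegree) : ℂ)‖ ^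
          (2 * l) = G ⟨D.1, D.2.1, D.2.2.2.2⟩ := by
    intro D
    simp only [G, b]
    congr 2
    apply Finset.sum_congr rfl
    intro P _
    rw [jacSym_irr P.2.2.1, mul_div_assoc]
    push_cast
    rfl
  simp only [hsum]
  have hle := tsum_comp_le_tsum_of_inj (f := G) (Summable.of_finite)
    (fun D => by simp only [G]; positivity)
    (i := fun D : {D : Polynomial F // D.Monic ∧ Squarefree (D : Polynomial F) ∧
      IsCoprime (D : Polynomial F) Δ ∧ (D : Polynomial F).natDegree = 2 * g + 1} =>
      (⟨D.1, D.2.1, D.2.2.2.2⟩ : {D : F[X] // D.Monic ∧ D.natDegree = 2 * g + 1})) (by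
      intro D E hDE
      have h0 := Subtype.mk.inj hDE
      exact Subtype.ext h0)
  refine hle.trans ?_
  rw [tsum_fintype]
  refine key.trans ?_
  have hc : (Fintype.card {D : F[X] // D.Monic ∧ D.natDegree = 2 * g + 1} : ℝ) ≤
      (Fintype.card F : ℝ) ^ 2 * (Fintype.card F : ℝ) ^ (2 * g) := by
    rw [← pow_add, show 2 + 2 * g = (2 * g + 1) + 1 by omega]
    exact_mod_cast cardX (F := F) (2 * g + 1)
  gcongr
end
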